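/- Let s, δ ∈ ℝ with s² + 4(1 - sδ) > 0 and κ := √(s² + 4(1 - sδ)). Let u, ρ : [0,T) × ℝ → ℝ be a C² solution of the magnetic two-component Hunter–Saxton system with c2 = 1, i.e. u_{tx} = -(1/2)u_x² - u u_{xx} + (1/2)ρ² - (sρ + 2(1 - sδ)) and ρ_t = -(ρu)_x + s u_x, and let φ solve φ_t(t,x) = u(t,φ(t,x)), φ(0,x) = x. Set a := u_x(0,x), b := ρ(0,x), T(t) := tan(κt/2), D(t) := (1 + a·T(t)/κ)² + ((b-s)·T(t)/κ)². Then for all t ∈ [0,T) with cos(κt/2) ≠ 0 and D(t) > 0: u_x(t, φ(t,x)) = [(-κ·T(t) + a)(1 + a·T(t)/κ) + (b-s)²·T(t)/κ] / D(t) and ρ(t, φ(t,x)) = s + (1 + T(t)²)(b - s)/D(t). -/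

import Mathlib

/-- Partial derivative in the first (time) variable. -/
noncomputable def pdt (f : ℝ × ℝ → ℝ) (t x : ℝ) : ℝ := deriv (fun τ => f (τ, x)) t

/-- Partial derivative in the second (space) variable. -/
noncomputable def pdx (f : ℝ × ℝ → ℝ) (t x : ℝ) : ℝ := deriv (fun y => f (t, y)) x

/-- `T(t) = tan(κt/2)`. -/
noncomputable def Tfun (κ t : ℝ) : ℝ := Real.tan (κ * t / 2)

/-- The denominator `D(t)` of the explicit solution formula. -/
noncomputable def Dfun (κ s a b t : ℝ) : ℝ :=
  (1 + a * Tfun κ t / κ)^2 + ((b - s) * Tfun κ t / κ)^2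

/-- Explicit formula for `u_x` along the Lagrangian flow. -/
noncomputable def Ufun (κ s a b t : ℝ) : ℝ :=
  ((-(κ * Tfun κ t) + a) * (1 + a * Tfun κ t / κ) + (b - s)^2 * Tfun κ t / κ) / Dfun κ s a b t

/-- Explicit formula for `ρ` along the Lagrangian flow. -/
noncomputable def Pfun (κ s a b t : ℝ) : ℝ :=
  s + (1 + (Tfun κ t)^2) * (b - s) / Dfun κ s a b t

/-!
Put `z = u_x + i (ρ - s)`. Along a characteristic `γ' = u(t, γ)` the whole system collapses to the
single complex Riccati equation `z' = -(z² + κ²) / 2`. The substitution `z = 2 w' / w` linearises it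
to `w'' = -(κ² / 4) w`, so `w = cos (κt/2) + (z(0)/κ) sin (κt/2)`. The defect `z w - 2 w'` solves a
linear homogeneous equation and starts at zero, so `z w = 2 w'` as long as `z` exists; as `w` and
`w'` have no common zero, this also gives `w ≠ 0`. The formulas for `u_x` and `ρ - s` are the real
and imaginary parts of `2 w' / w`, and `D(t) = |w|² / cos² (κt/2)`.
-/

open Set Filter Topology

section RiccatiEquation

-- Grönwall's inequality in Mathlib needs a right derivative at `a`; it is applied on `[c, b]` and
-- `c` then tends to `a`.
lemma eq_zero_of_norm_deriv_le_mul_norm {E : Type*} [NormedAddCommGroup E] [NormedSpace ℝ E]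
    {f f' : ℝ → E} {K a b : ℝ} (hab : a < b) (hf : ContinuousOn f (Icc a b))
    (hf' : ∀ t ∈ Ioo a b, HasDerivAt f (f' t) t) (hfa : f a = 0)
    (hbound : ∀ t ∈ Ioo a b, ‖f' t‖ ≤ K * ‖f t‖) : f b = 0 := by
  have bound_from : ∀ c ∈ Ioo a b, ‖f b‖ ≤ ‖f c‖ * Real.exp (K * (b - c)) := fun c hc => by
    have hsub : Ico c b ⊆ Ioo a b := fun t ht => ⟨hc.1.trans_le ht.1, ht.2⟩
    simpa only [gronwallBound_ε0] using
      norm_le_gronwallBound_of_norm_deriv_right_le (ε := 0) (hf.mono (Icc_subset_Icc_left hc.1.le))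
        (fun t ht => (hf' t (hsub ht)).hasDerivWithinAt) le_rfl
        (fun t ht => (hbound t (hsub ht)).trans_eq (add_zero _).symm) b (right_mem_Icc.2 hc.2.le)
  have hf_right : Tendsto f (𝓝[>] a) (𝓝 0) := by
    rw [← hfa, ← nhdsWithin_Ioo_eq_nhdsGT hab]
    exact (hf a (left_mem_Icc.2 hab.le)).mono Ioo_subset_Icc_self
  have hexp : Tendsto (fun c => Real.exp (K * (b - c))) (𝓝[>] a) (𝓝 (Real.exp (K * (b - a)))) :=
    Continuous.tendsto' (by fun_prop) _ _ rfl |>.mono_left nhdsWithin_le_nhds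
  have hlim : Tendsto (fun c => ‖f c‖ * Real.exp (K * (b - c))) (𝓝[>] a) (𝓝 0) := by
    simpa only [norm_zero, zero_mul] using hf_right.norm.mul hexp
  exact norm_le_zero_iff.1 <| ge_of_tendsto hlim <|
    eventually_of_mem (Ioo_mem_nhdsGT hab) bound_from

lemma riccati_mul_eq_deriv {A : Type*} [NormedRing A] [NormedAlgebra ℝ A] {y q w w' : ℝ → A}
    {a b : ℝ} (hab : a ≤ b) (hyc : ContinuousOn y (Icc a b))
    (hwc : ContinuousOn w (Icc a b)) (hwc' : ContinuousOn w' (Icc a b))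
    (hy : ∀ t ∈ Ioo a b, HasDerivAt y (-(y t ^ 2 + q t)) t)
    (hw : ∀ t ∈ Ioo a b, HasDerivAt w (w' t) t)
    (hw' : ∀ t ∈ Ioo a b, HasDerivAt w' (-(q t * w t)) t)
    (ha : y a * w a = w' a) : y b * w b = w' b := by
  rcases hab.eq_or_lt with rfl | hab
  · exact ha
  obtain ⟨K, hK⟩ := isCompact_Icc.exists_bound_of_continuousOn hyc
  have defect_deriv : ∀ t ∈ Ioo a b, HasDerivAt (fun τ => y τ * w τ - w' τ)
      (-(y t * (y t * w t - w' t))) t := fun t ht =>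
    (((hy t ht).fun_mul (hw t ht)).fun_sub (hw' t ht)).congr_deriv (by noncomm_ring)
  refine sub_eq_zero.1 <| eq_zero_of_norm_deriv_le_mul_norm (K := K) hab
    ((hyc.mul hwc).sub hwc') defect_deriv (sub_eq_zero.2 ha) fun t ht => ?_
  rw [norm_neg]
  exact norm_mul_le_of_le (hK t (Ioo_subset_Icc_self ht)) le_rfl

variable {z : ℝ → ℂ} {κ : ℂ} {t : ℝ}

lemma riccati_mul_cos_add_sin (hκ : κ ≠ 0) (ht : 0 ≤ t) (hzc : ContinuousOn z (Icc 0 t))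
    (hz : ∀ τ ∈ Ioo 0 t, HasDerivAt z (-(z τ ^ 2 + κ ^ 2) / 2) τ) :
    z t * (Complex.cos (κ * t / 2) + z 0 / κ * Complex.sin (κ * t / 2)) =
      z 0 * Complex.cos (κ * t / 2) - κ * Complex.sin (κ * t / 2) := by
  have harg (τ : ℂ) : HasDerivAt (fun σ => κ * σ / 2) (κ / 2) τ := by
    simpa only [mul_one, id] using ((hasDerivAt_id τ).const_mul κ).div_const 2
  have hcos (τ : ℝ) := (harg τ).ccos.comp_ofReal
  have hsin (τ : ℝ) := (harg τ).csin.comp_ofReal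
  have hlin := riccati_mul_eq_deriv (y := fun τ => z τ / 2) (q := fun _ => κ ^ 2 / 4)
    (w := fun τ => Complex.cos (κ * τ / 2) + z 0 / κ * Complex.sin (κ * τ / 2))
    (w' := fun τ => (z 0 * Complex.cos (κ * τ / 2) - κ * Complex.sin (κ * τ / 2)) / 2)
    ht (hzc.div_const 2) (by fun_prop) (by fun_prop)
    (fun τ hτ => ((hz τ hτ).div_const 2).congr_deriv (by ring))
    (fun τ _ => ((hcos τ).fun_add ((hsin τ).const_mul (z 0 / κ))).congr_deriv
      (by field_simp; ring))
    (fun τ _ => ((((hcos τ).const_mul (z 0)).fun_sub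
      ((hsin τ).const_mul κ)).div_const 2).congr_deriv (by field_simp; ring))
    (by simp)
  linear_combination 2 * hlin

lemma one_add_mul_tan_div_ne_zero_of_mul_eq {c y θ : ℂ} (hκ : κ ≠ 0) (hθ : Complex.cos θ ≠ 0)
    (h : y * (1 + c * Complex.tan θ / κ) = c - κ * Complex.tan θ) :
    1 + c * Complex.tan θ / κ ≠ 0 := fun hzero => by
  have hc : c = κ * Complex.tan θ := by
    rw [hzero, mul_zero] at h
    exact sub_eq_zero.1 h.symm
  have one_add_tan_sq : 1 + Complex.tan θ ^ 2 = 0 := by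
    rw [← hzero, hc]
    field_simp
  have cos_sq_add_sin_sq : Complex.cos θ ^ 2 + Complex.sin θ ^ 2 = 0 := by
    rw [← Complex.tan_mul_cos hθ]
    linear_combination Complex.cos θ ^ 2 * one_add_tan_sq
  exact one_ne_zero ((Complex.cos_sq_add_sin_sq θ).symm.trans cos_sq_add_sin_sq)

lemma riccati_eq_div_tan (hκ : κ ≠ 0) (ht : 0 ≤ t) (hzc : ContinuousOn z (Icc 0 t))
    (hz : ∀ τ ∈ Ioo 0 t, HasDerivAt z (-(z τ ^ 2 + κ ^ 2) / 2) τ)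
    (hcos : Complex.cos (κ * t / 2) ≠ 0) :
    z t = (z 0 - κ * Complex.tan (κ * t / 2)) / (1 + z 0 * Complex.tan (κ * t / 2) / κ) := by
  have hmul : z t * (1 + z 0 * Complex.tan (κ * t / 2) / κ) =
      z 0 - κ * Complex.tan (κ * t / 2) := by
    have h := riccati_mul_cos_add_sin hκ ht hzc hz
    rw [← Complex.tan_mul_cos hcos] at h
    apply mul_right_cancel₀ hcos
    linear_combination h
  exact eq_div_of_mul_eq (one_add_mul_tan_div_ne_zero_of_mul_eq hκ hcos hmul) hmul

end RiccatiEquation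

section PartialDerivatives

variable {f g : ℝ × ℝ → ℝ} {t x : ℝ}

lemma pdt_eq_fderiv (hf : DifferentiableAt ℝ f (t, x)) : pdt f t x = fderiv ℝ f (t, x) (1, 0) :=
  (hf.hasFDerivAt.comp_hasDerivAt (f := fun τ => (τ, x)) t
    ((hasDerivAt_id t).prodMk (hasDerivAt_const t x))).deriv

lemma pdx_eq_fderivWithin {I : Set ℝ} (ht : t ∈ I)
    (hf : DifferentiableWithinAt ℝ f (I ×ˢ univ) (t, x)) :
    pdx f t x = fderivWithin ℝ f (I ×ˢ univ) (t, x) (0, 1) := by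
  have hline : HasDerivWithinAt (fun y : ℝ => (t, y)) (0, 1) univ x :=
    ((hasDerivAt_const x t).prodMk (hasDerivAt_id x)).hasDerivWithinAt
  have hcomp := hf.hasFDerivWithinAt.comp_hasDerivWithinAt (f := fun y : ℝ => (t, y)) x hline
    fun _ _ => ⟨ht, trivial⟩
  exact (hasDerivWithinAt_univ.1 hcomp).deriv

lemma pdx_eq_fderiv (hf : DifferentiableAt ℝ f (t, x)) : pdx f t x = fderiv ℝ f (t, x) (0, 1) := by
  simpa only [univ_prod_univ, fderivWithin_univ] using
    pdx_eq_fderivWithin (mem_univ t) hf.differentiableWithinAt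

lemma contDiffOn_pdx {I : Set ℝ} {m n : WithTop ℕ∞} (hI : UniqueDiffOn ℝ I) (hmn : m + 1 ≤ n)
    (hf : ContDiffOn ℝ n f (I ×ˢ univ)) :
    ContDiffOn ℝ m (fun p => pdx f p.1 p.2) (I ×ˢ univ) := by
  have hn : n ≠ 0 := by rintro rfl; simp at hmn
  exact ((hf.fderivWithin (hI.prod uniqueDiffOn_univ) hmn).clm_apply contDiffOn_const).congr
    fun p hp => pdx_eq_fderivWithin hp.1 (hf.differentiableOn hn p hp)

lemma pdx_mul (hf : DifferentiableAt ℝ f (t, x)) (hg : DifferentiableAt ℝ g (t, x)) :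
    pdx (fun p => f p * g p) t x = pdx f t x * g (t, x) + f (t, x) * pdx g t x := by
  rw [pdx_eq_fderiv (hf.fun_mul hg), pdx_eq_fderiv hf, pdx_eq_fderiv hg, fderiv_fun_mul hf hg]
  simp only [add_apply, smul_apply, smul_eq_mul]
  ring

lemma hasDerivAt_along_curve {γ : ℝ → ℝ} {c : ℝ} (hf : DifferentiableAt ℝ f (t, γ t))
    (hγ : HasDerivAt γ c t) :
    HasDerivAt (fun τ => f (τ, γ τ)) (pdt f t (γ t) + c * pdx f t (γ t)) t := by
  refine (hf.hasFDerivAt.comp_hasDerivAt (f := fun τ => (τ, γ τ)) t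
    ((hasDerivAt_id t).prodMk hγ)).congr_deriv ?_
  rw [pdt_eq_fderiv hf, pdx_eq_fderiv hf, ← smul_eq_mul c, ← map_smul, ← map_add]
  simp

end PartialDerivatives

section MagneticHunterSaxton

/-- The magnetic two-component Hunter–Saxton system with parameters `s`, `c₂`, `δ` holds for
`(u, ρ)` at the point `(t, x)`. -/
structure IsMagneticHunterSaxtonAt (s c₂ δ : ℝ) (u ρ : ℝ × ℝ → ℝ) (t x : ℝ) : Prop where
  pdt_pdx : pdt (fun p => pdx u p.1 p.2) t x =
    -(1 / 2) * (pdx u t x) ^ 2 - u (t, x) * pdx (fun p => pdx u p.1 p.2) t x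
      + (1 / 2) * (ρ (t, x)) ^ 2 - (s * ρ (t, x) + 2 * (c₂ - s * δ))
  pdt_density : pdt ρ t x = -(pdx (fun p => ρ p * u p) t x) + s * pdx u t x

/-- The complex unknown `u_x + i (ρ - s)`, in which the system becomes a scalar Riccati equation
along characteristics. -/
noncomputable def complexSlope (s : ℝ) (u ρ : ℝ × ℝ → ℝ) (t x : ℝ) : ℂ :=
  ⟨pdx u t x, ρ (t, x) - s⟩

variable {s c₂ δ κ : ℝ} {u ρ : ℝ × ℝ → ℝ} {γ : ℝ → ℝ} {t : ℝ}

lemma IsMagneticHunterSaxtonAt.hasDerivAt_complexSlope (hκ : κ ^ 2 = s ^ 2 + 4 * (c₂ - s * δ))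
    (hsol : IsMagneticHunterSaxtonAt s c₂ δ u ρ t (γ t))
    (hu : DifferentiableAt ℝ u (t, γ t))
    (hux : DifferentiableAt ℝ (fun p => pdx u p.1 p.2) (t, γ t))
    (hρ : DifferentiableAt ℝ ρ (t, γ t)) (hγ : HasDerivAt γ (u (t, γ t)) t) :
    HasDerivAt (fun τ => complexSlope s u ρ τ (γ τ))
      (-(complexSlope s u ρ t (γ t) ^ 2 + (κ : ℂ) ^ 2) / 2) t := by
  have slope_deriv : HasDerivAt (fun τ => pdx u τ (γ τ))
      (((ρ (t, γ t) - s) ^ 2 - pdx u t (γ t) ^ 2 - κ ^ 2) / 2) t :=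
    (hasDerivAt_along_curve hux hγ).congr_deriv (by rw [hsol.pdt_pdx, hκ]; ring)
  have density_deriv : HasDerivAt (fun τ => ρ (τ, γ τ) - s)
      (-((ρ (t, γ t) - s) * pdx u t (γ t))) t :=
    ((hasDerivAt_along_curve hρ hγ).sub_const s).congr_deriv
      (by rw [hsol.pdt_density, pdx_mul hρ hu]; ring)
  simp only [complexSlope, Complex.mk_eq_add_mul_I]
  refine (slope_deriv.ofReal_comp.add
    (density_deriv.ofReal_comp.mul_const Complex.I)).congr_deriv ?_
  push_cast
  linear_combination (1 / 2) * ((ρ (t, γ t) : ℂ) - s) ^ 2 * Complex.I_sq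

lemma continuousOn_complexSlope {S : Set (ℝ × ℝ)}
    (hux : ContinuousOn (fun p => pdx u p.1 p.2) S) (hρ : ContinuousOn ρ S) :
    ContinuousOn (fun p => complexSlope s u ρ p.1 p.2) S :=
  Complex.equivRealProdCLM.symm.continuous.comp_continuousOn
    (hux.prodMk (hρ.sub continuousOn_const))

lemma mk_Ufun_Pfun_sub_eq_div (hκ : κ ≠ 0) (s a b t : ℝ) :
    (⟨Ufun κ s a b t, Pfun κ s a b t - s⟩ : ℂ) =
      (⟨a, b - s⟩ - κ * Complex.tan (κ * t / 2)) /
        (1 + ⟨a, b - s⟩ * Complex.tan (κ * t / 2) / κ) := by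
  have htan : Complex.tan (κ * t / 2) = Tfun κ t := by simp [Tfun]
  set w : ℂ := 1 + ⟨a, b - s⟩ * Tfun κ t / κ with hw
  have hre : w.re = 1 + a * Tfun κ t / κ := by simp [hw]
  have him : w.im = (b - s) * Tfun κ t / κ := by simp [hw]
  have hD : Complex.normSq w = Dfun κ s a b t := by
    rw [Complex.normSq_apply, hre, him, Dfun]; ring
  rw [htan, ← hw]
  apply Complex.ext
  · rw [Complex.div_re, hD, hre, him, Ufun]
    simp only [Complex.sub_re, Complex.mul_re, Complex.ofReal_re, Complex.ofReal_im, mul_zero,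
      sub_zero, Complex.sub_im, Complex.mul_im, zero_mul, add_zero]
    ring
  · rw [Complex.div_im, hD, hre, him, Pfun]
    simp only [add_sub_cancel_left, Complex.sub_im, Complex.mul_im, Complex.ofReal_re,
      Complex.ofReal_im, mul_zero, zero_mul, add_zero, sub_zero, Complex.sub_re, Complex.mul_re]
    field_simp
    ring

-- The equations are only imposed for `t > 0`: `pdt` is a two-sided `deriv`, which at `t = 0`
-- sees the values at negative times.
theorem stmt_7_general {Tm : ℝ} (hκ0 : κ ≠ 0) (hκ : κ ^ 2 = s ^ 2 + 4 * (c₂ - s * δ))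
    (hu : ContDiffOn ℝ 2 u (Ico 0 Tm ×ˢ univ)) (hρ : DifferentiableOn ℝ ρ (Ico 0 Tm ×ˢ univ))
    (hsol : ∀ τ ∈ Ioo 0 Tm, ∀ x, IsMagneticHunterSaxtonAt s c₂ δ u ρ τ x)
    (hγc : ContinuousOn γ (Ico 0 Tm)) (hγ : ∀ τ ∈ Ioo 0 Tm, HasDerivAt γ (u (τ, γ τ)) τ)
    (ht : t ∈ Ico 0 Tm) (hcos : Real.cos (κ * t / 2) ≠ 0) :
    pdx u t (γ t) = Ufun κ s (pdx u 0 (γ 0)) (ρ (0, γ 0)) t ∧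
      ρ (t, γ t) = Pfun κ s (pdx u 0 (γ 0)) (ρ (0, γ 0)) t := by
  have hux : ContDiffOn ℝ 1 (fun p => pdx u p.1 p.2) (Ico 0 Tm ×ˢ univ) :=
    contDiffOn_pdx (uniqueDiffOn_Ico 0 Tm) one_add_one_eq_two.le hu
  have hIcc : Icc 0 t ⊆ Ico 0 Tm := Icc_subset_Ico_right ht.2
  have slope_cont : ContinuousOn (fun τ => complexSlope s u ρ τ (γ τ)) (Icc 0 t) :=
    (continuousOn_complexSlope hux.continuousOn hρ.continuousOn).comp
      (continuousOn_id.prodMk (hγc.mono hIcc)) fun τ hτ => ⟨hIcc hτ, trivial⟩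
  have slope_riccati : ∀ τ ∈ Ioo 0 t, HasDerivAt (fun τ => complexSlope s u ρ τ (γ τ))
      (-(complexSlope s u ρ τ (γ τ) ^ 2 + (κ : ℂ) ^ 2) / 2) τ := fun τ hτ => by
    have hτT : τ ∈ Ioo 0 Tm := ⟨hτ.1, hτ.2.trans ht.2⟩
    have hnhds : Ico 0 Tm ×ˢ univ ∈ 𝓝 (τ, γ τ) :=
      prod_mem_nhds (Ico_mem_nhds hτT.1 hτT.2) univ_mem
    exact (hsol τ hτT (γ τ)).hasDerivAt_complexSlope hκ
      ((hu.differentiableOn two_ne_zero).differentiableAt hnhds)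
      ((hux.differentiableOn one_ne_zero).differentiableAt hnhds)
      (hρ.differentiableAt hnhds) (hγ τ hτT)
  have slope_eq : complexSlope s u ρ t (γ t) = _ :=
    riccati_eq_div_tan (z := fun τ => complexSlope s u ρ τ (γ τ)) (Complex.ofReal_ne_zero.2 hκ0)
      ht.1 slope_cont slope_riccati (by exact_mod_cast hcos)
  rw [complexSlope, complexSlope, ← mk_Ufun_Pfun_sub_eq_div hκ0, Complex.mk.injEq] at slope_eq
  exact ⟨slope_eq.1, sub_left_inj.1 slope_eq.2⟩

end MagneticHunterSaxton

theorem stmt_7 (s δ κ Tm : ℝ) (hpos : 0 < s^2 + 4 * (1 - s * δ))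
    (hκ : κ = Real.sqrt (s^2 + 4 * (1 - s * δ)))
    (u ρ φ : ℝ × ℝ → ℝ)
    (hu : ContDiffOn ℝ 2 u (Set.Ico 0 Tm ×ˢ Set.univ))
    (hρ : ContDiffOn ℝ 2 ρ (Set.Ico 0 Tm ×ˢ Set.univ))
    (hPDE1 : ∀ t ∈ Set.Ico (0:ℝ) Tm, ∀ x : ℝ,
      pdt (fun p => pdx u p.1 p.2) t x =
        -(1/2) * (pdx u t x)^2 - u (t, x) * pdx (fun p => pdx u p.1 p.2) t x
          + (1/2) * (ρ (t, x))^2 - (s * ρ (t, x) + 2 * (1 - s * δ)))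
    (hPDE2 : ∀ t ∈ Set.Ico (0:ℝ) Tm, ∀ x : ℝ,
      pdt ρ t x = -(pdx (fun p => ρ p * u p) t x) + s * pdx u t x)
    (hφ : ∀ t ∈ Set.Ico (0:ℝ) Tm, ∀ x : ℝ,
      HasDerivAt (fun τ => φ (τ, x)) (u (t, φ (t, x))) t)
    (hφ0 : ∀ x : ℝ, φ (0, x) = x)
    (x : ℝ) :
    ∀ t ∈ Set.Ico (0:ℝ) Tm,
      Real.cos (κ * t / 2) ≠ 0 →
      0 < Dfun κ s (pdx u 0 x) (ρ (0, x)) t →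
      pdx u t (φ (t, x)) = Ufun κ s (pdx u 0 x) (ρ (0, x)) t ∧
      ρ (t, φ (t, x)) = Pfun κ s (pdx u 0 x) (ρ (0, x)) t := by
  intro t ht hcos _
  have hκ_sq : κ ^ 2 = s ^ 2 + 4 * (1 - s * δ) := hκ ▸ Real.sq_sqrt hpos.le
  simpa only [hφ0] using stmt_7_general (γ := fun τ => φ (τ, x)) (hκ ▸ (Real.sqrt_pos.2 hpos).ne')
    hκ_sq hu (hρ.differentiableOn two_ne_zero)
    (fun τ hτ y => ⟨hPDE1 τ (Set.Ioo_subset_Ico_self hτ) y, hPDE2 τ (Set.Ioo_subset_Ico_self hτ) y⟩)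
    (fun τ hτ => (hφ τ hτ x).continuousAt.continuousWithinAt)
    (fun τ hτ => hφ τ (Set.Ioo_subset_Ico_self hτ) x) ht hcos
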